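/- For every H₀ in the class 𝓗 there exist a sequence of affine lines (π_n)_{n≥0} in ℝ² and a sequence of compact convex sets (H_n)_{n≥0} with H_{n+1} = S_{π_n}(H_n) for every n ≥ 0, such that H_n converges in Hausdorff distance to a regular hexagon H* with |H*| = |H₀|. (In other words, every centrally symmetric convex hexagon or parallelogram can be transformed into a regular hexagon of the same area by at most countably many Steiner symmetrizations.) -/

import Mathlib

open MeasureTheory Metric Filter Real Set
open scoped Topology ENNReal NNReal RealInnerProductSpace

noncomputable section

/-- The Euclidean plane. -/
abbrev E2 : Type := EuclideanSpace ℝ (Fin 2)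

/-- The line through `x` with direction `v`. -/
def lineThrough (x v : E2) : Set E2 := {y : E2 | ∃ t : ℝ, y = x + t • v}

/-- Steiner symmetrization of `A` with respect to the affine line `{x | ⟪x, v⟫ = c}`,
where `v` is a unit normal vector of the line. -/
def steiner (v : E2) (c : ℝ) (A : Set E2) : Set E2 :=
  {y : E2 | ∃ x : E2, ⟪x, v⟫ = c ∧ (A ∩ lineThrough x v).Nonempty ∧
    ∃ r : ℝ, y = x + r • v ∧
      ENNReal.ofReal (2 * |r|) ≤ μH[1] (A ∩ lineThrough x v)}

/-- The class `𝓗` of centrally symmetric convex hexagons (possibly degenerated to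
parallelograms), i.e. the convex polygons tiling the plane by translations. -/
def Hex (H : Set E2) : Prop :=
  (∃ x₀ p q r : E2, H = (fun y => x₀ + y) '' convexHull ℝ ({p, q, r, -p, -q, -r} : Set E2)) ∧
  (interior H).Nonempty

/-- The `k`-th vertex of the standard regular hexagon. -/
def hexVertex (k : ℕ) : E2 :=
  (WithLp.equiv 2 (Fin 2 → ℝ)).symm ![Real.cos (k * π / 3), Real.sin (k * π / 3)]

/-- The standard regular hexagon, with vertices `(cos (kπ/3), sin (kπ/3))`, `k = 0, …, 5`. -/
def stdHexagon : Set E2 := convexHull ℝ (Set.range fun k : Fin 6 => hexVertex k)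

/-- A similarity of the plane (composition of a rotation, a dilation and a translation,
possibly with a reflection). -/
def IsSimilarity (f : E2 → E2) : Prop :=
  ∃ s : ℝ, 0 < s ∧ ∀ x y, dist (f x) (f y) = s * dist x y

/-- A regular hexagon is any image of the standard one under a similarity. -/
def IsRegularHexagon (H : Set E2) : Prop := ∃ f : E2 → E2, IsSimilarity f ∧ H = f '' stdHexagon

/-- Convergence of a sequence of sets in the Hausdorff distance. -/
def HausdorffTendsto (Hn : ℕ → Set E2) (H : Set E2) : Prop :=
  Tendsto (fun n => EMetric.hausdorffEdist (Hn n) H) atTop (𝓝 0)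

/-- The planar cross product (determinant) of two vectors. -/
def det2 (u w : E2) : ℝ := u 0 * w 1 - u 1 * w 0

/-- `A, B, C, D, E, F` are (consecutive) vertices of the centrally symmetric hexagon `H`:
`H` is their convex hull, `D, E, F` are the antipodes of `A, B, C` with respect to a center
`o`, and `H` has nonempty interior. -/
def HexWithVertices (A B C D E F : E2) (H : Set E2) : Prop :=
  H = convexHull ℝ ({A, B, C, D, E, F} : Set E2) ∧
  (∃ o : E2, D = (2:ℝ) • o - A ∧ E = (2:ℝ) • o - B ∧ F = (2:ℝ) • o - C) ∧
  (interior H).Nonempty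

/-- The vertices `A, B, C, D, E, F` are listed in counterclockwise order. -/
def CCWList (A B C D E F : E2) : Prop :=
  0 ≤ det2 (B - A) (C - B) ∧ 0 ≤ det2 (C - B) (D - C) ∧ 0 ≤ det2 (D - C) (E - D) ∧
  0 ≤ det2 (E - D) (F - E) ∧ 0 ≤ det2 (F - E) (A - F) ∧ 0 ≤ det2 (A - F) (B - A)

/-- The six vertices are distinct and no three of them are collinear. -/
def NondegenerateHex (A B C D E F : E2) : Prop :=
  [A, B, C, D, E, F].Pairwise (· ≠ ·) ∧
  ∀ P Q R : E2, P ∈ ({A, B, C, D, E, F} : Set E2) → Q ∈ ({A, B, C, D, E, F} : Set E2) →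
    R ∈ ({A, B, C, D, E, F} : Set E2) → P ≠ Q → P ≠ R → Q ≠ R →
      ¬ Collinear ℝ ({P, Q, R} : Set E2)

/-- The centrally symmetric hexagon with vertices `±p, ±q, ±r`. -/
def hexHull (p q r : E2) : Set E2 := convexHull ℝ {p, q, r, -p, -q, -r}

/-- The points `p, q, r, -p, -q, -r` are in (weakly) convex position, in counterclockwise order. -/
structure ConvexTriple (p q r : E2) : Prop where
  pq_pos : 0 < det2 p q
  qr_pos : 0 < det2 q r
  pr_pos : 0 < det2 p r
  pq_le : det2 p q ≤ det2 q r + det2 p r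
  qr_le : det2 q r ≤ det2 p q + det2 p r
  pr_le : det2 p r ≤ det2 p q + det2 q r

lemma hexHull_neg_mem {p q r x : E2} (hx : x ∈ hexHull p q r) : -x ∈ hexHull p q r := by
  have h : (-LinearMap.id : E2 →ₗ[ℝ] E2) '' hexHull p q r = hexHull p q r := by
    rw [hexHull, LinearMap.image_convexHull]
    congr 1
    ext y
    simp only [LinearMap.neg_apply, LinearMap.id_apply, Set.image_insert_eq, Set.image_singleton,
      neg_neg, Set.mem_insert_iff, Set.mem_singleton_iff]
    tauto
  rw [← h]
  exact ⟨x, hx, rfl⟩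

lemma convex_abs_det2_le (u : E2) (c : ℝ) : Convex ℝ {x : E2 | |det2 u x| ≤ c} := by
  intro x hx y hy a b ha hb hab
  simp only [Set.mem_ofPred_eq, det2, abs_le, PiLp.add_apply, PiLp.smul_apply, smul_eq_mul] at *
  obtain rfl : b = 1 - a := by linarith
  constructor <;> nlinarith

lemma smul_add_smul_mem_of_add_le_one {s : Set E2} (hs : Convex ℝ s) (h0 : (0 : E2) ∈ s)
    {x y : E2} (hx : x ∈ s) (hy : y ∈ s) {a b : ℝ} (ha : 0 ≤ a) (hb : 0 ≤ b) (hab : a + b ≤ 1) :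
    a • x + b • y ∈ s := by
  have h := hs.sum_mem (t := Finset.univ) (w := ![a, b, 1 - a - b]) (z := ![x, y, 0])
    (by intro i _; fin_cases i <;> simp <;> linarith)
    (by simp [Fin.sum_univ_three]) (by intro i _; fin_cases i <;> simp [*])
  simpa [Fin.sum_univ_three] using h

/-- A point of the cone spanned by `p` and `q` lying below the line through `p` and `q`. -/
lemma mem_of_mem_cone {s : Set E2} (hs : Convex ℝ s) (h0 : (0 : E2) ∈ s)
    {p q x : E2} (hp : p ∈ s) (hq : q ∈ s) (hpq : 0 < det2 p q) (h1 : 0 ≤ det2 p x)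
    (h2 : 0 ≤ det2 x q) (h3 : det2 p x + det2 x q ≤ det2 p q) : x ∈ s := by
  have hx : x = (det2 x q / det2 p q) • p + (det2 p x / det2 p q) • q := by
    have hne := hpq.ne'
    ext i
    fin_cases i <;> simp <;> field_simp <;> simp only [det2] <;> ring
  rw [hx]
  refine smul_add_smul_mem_of_add_le_one hs h0 hp hq (by positivity) (by positivity) ?_
  rw [← add_div, div_le_one hpq]
  linarith

lemma mem_hexHull_iff {p q r : E2} (h : ConvexTriple p q r) (x : E2) :
    x ∈ hexHull p q r ↔ |det2 (q - p) x| ≤ det2 p q ∧ |det2 (r - q) x| ≤ det2 q r ∧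
      |det2 (p + r) x| ≤ det2 p r := by
  obtain ⟨hA, hB, hC, h1, h2, h3⟩ := h
  constructor
  · intro hx
    have hsub : hexHull p q r ⊆ {x | |det2 (q - p) x| ≤ det2 p q} ∩
        {x | |det2 (r - q) x| ≤ det2 q r} ∩ {x | |det2 (p + r) x| ≤ det2 p r} := by
      refine convexHull_min ?_ (((convex_abs_det2_le _ _).inter (convex_abs_det2_le _ _)).inter
        (convex_abs_det2_le _ _))
      rintro y (rfl | rfl | rfl | rfl | rfl | rfl) <;>
        simp only [Set.mem_inter_iff, Set.mem_ofPred_eq, abs_le] <;>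
        refine ⟨⟨⟨?_, ?_⟩, ⟨?_, ?_⟩⟩, ⟨?_, ?_⟩⟩ <;> simp [det2] at * <;> linarith
    exact ⟨(hsub hx).1.1, (hsub hx).1.2, (hsub hx).2⟩
  · have hconv : Convex ℝ (hexHull p q r) := convex_convexHull ℝ _
    have hp : p ∈ hexHull p q r := subset_convexHull ℝ _ (by simp)
    have hq : q ∈ hexHull p q r := subset_convexHull ℝ _ (by simp)
    have hr : r ∈ hexHull p q r := subset_convexHull ℝ _ (by simp)
    have hp' := hexHull_neg_mem hp
    have h0 : (0 : E2) ∈ hexHull p q r := by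
      have := hconv hp hp' (show (0 : ℝ) ≤ 1 / 2 by norm_num) (show (0 : ℝ) ≤ 1 / 2 by norm_num)
        (by norm_num)
      simpa using this
    have key : ∀ y : E2, 0 ≤ det2 p y → |det2 (q - p) y| ≤ det2 p q →
        |det2 (r - q) y| ≤ det2 q r → |det2 (p + r) y| ≤ det2 p r → y ∈ hexHull p q r := by
      intro y hpy e1 e2 e3
      rw [abs_le] at e1 e2 e3
      rcases le_total (det2 q y) 0 with hqy | hqy
      · refine mem_of_mem_cone hconv h0 hp hq hA hpy ?_ ?_ <;> simp [det2] at * <;> linarith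
      rcases le_total (det2 r y) 0 with hry | hry
      · refine mem_of_mem_cone hconv h0 hq hr hB hqy ?_ ?_ <;> simp [det2] at * <;> linarith
      · refine mem_of_mem_cone hconv h0 hr hp' ?_ hry ?_ ?_ <;> simp [det2] at * <;> linarith
    rintro ⟨e1, e2, e3⟩
    have hn : ∀ u : E2, det2 u (-x) = -det2 u x := fun u => by simp [det2]; ring
    rcases le_total 0 (det2 p x) with hx | hx
    · exact key x hx e1 e2 e3
    · have := key (-x) (by rw [hn]; linarith) (by rwa [hn, abs_neg]) (by rwa [hn, abs_neg])
        (by rwa [hn, abs_neg])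
      simpa using hexHull_neg_mem this

/-- Half the length of the chord at height `t` of a hexagon with chords of length `2 * a` at the
heights `±b` and top vertex at height `h`. -/
def halfWidth (a b h t : ℝ) : ℝ := if |t| ≤ b then a else a * (h - |t|) / (h - b)

/-- The midpoint of the chord at height `t` of a hexagon whose chord at height `b` has
midpoint `α` and whose top vertex is `(β, h)`. -/
def chordMid (b h α β t : ℝ) : ℝ :=
  if |t| ≤ b then α * t / b else
    if 0 ≤ t then (α * (h - t) + β * (t - b)) / (h - b)
    else -((α * (h + t) + β * (-t - b)) / (h - b))

lemma chordMid_zero (b h t : ℝ) : chordMid b h 0 0 t = 0 := by simp [chordMid]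

lemma chordMid_neg {b h α β t : ℝ} (hb : 0 ≤ b) :
    chordMid b h α β (-t) = -chordMid b h α β t := by
  unfold chordMid
  rw [abs_neg]
  split_ifs with h1 h2 h3 h3
  · ring
  · obtain rfl : t = 0 := by linarith
    simp [hb] at h1
  · simp
  · simp [sub_eq_add_neg]
  · linarith

lemma halfWidth_nonneg {a b h t : ℝ} (ha : 0 ≤ a) (ht : |t| ≤ h) :
    0 ≤ halfWidth a b h t := by
  unfold halfWidth
  split_ifs
  · exact ha
  · exact div_nonneg (mul_nonneg ha (by linarith)) (by linarith)

lemma strips_iff_of_nonneg {a b h α β s t : ℝ} (ha : 0 < a) (hb : 0 < b) (hbh : b ≤ h)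
    (hk : |α * h - b * β| ≤ a * b) (ht : 0 ≤ t) :
    (|(β - α - a) * t - (h - b) * s| ≤ (α + a) * h - b * β ∧
      |(α - a - β) * t + (h - b) * s| ≤ β * b - h * (α - a) ∧
      |2 * α * t - 2 * b * s| ≤ 2 * a * b) ↔
    |t| ≤ h ∧ |s - chordMid b h α β t| ≤ halfWidth a b h t := by
  unfold chordMid halfWidth
  simp only [abs_of_nonneg ht, ht, if_true]
  rw [abs_le] at hk
  obtain ⟨k1, k2⟩ := hk
  split_ifs with htb
  · have e : s - α * t / b = (b * s - α * t) / b := by field_simp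
    rw [e, abs_div, abs_of_pos hb, div_le_iff₀ hb]
    simp only [abs_le]
    constructor
    · rintro ⟨-, -, h3, h4⟩
      exact ⟨by linarith, by linarith, by linarith⟩
    · rintro ⟨-, h3, h4⟩
      have m1 := mul_le_mul_of_nonneg_left h3 (sub_nonneg.2 hbh)
      have m2 := mul_le_mul_of_nonneg_left h4 (sub_nonneg.2 hbh)
      have n1 : 0 ≤ t * (a * b + (α * h - b * β)) := mul_nonneg ht (by linarith)
      have n2 : 0 ≤ t * (a * b - (α * h - b * β)) := mul_nonneg ht (by linarith)
      have n3 : 0 ≤ (b - t) * (a * b + (α * h - b * β)) :=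
        mul_nonneg (by linarith) (by linarith)
      have n4 : 0 ≤ (b - t) * (a * b - (α * h - b * β)) :=
        mul_nonneg (by linarith) (by linarith)
      refine ⟨⟨?_, ?_⟩, ⟨?_, ?_⟩, by linarith, by linarith⟩ <;>
        refine le_of_mul_le_mul_left ?_ hb <;> nlinarith
  · push Not at htb
    constructor
    · rintro ⟨h1, h2, -⟩
      rw [abs_le] at h1 h2
      have hth : t ≤ h := by
        refine le_of_mul_le_mul_left ?_ ha
        nlinarith
      have hpos : 0 < h - b := by linarith
      refine ⟨hth, ?_⟩
      rw [abs_le, neg_le_iff_add_nonneg, sub_le_iff_le_add]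
      constructor
      · have e : s - (α * (h - t) + β * (t - b)) / (h - b) + a * (h - t) / (h - b) =
          (s * (h - b) - (α * (h - t) + β * (t - b)) + a * (h - t)) / (h - b) := by
          field_simp
        rw [e]
        exact div_nonneg (by nlinarith) hpos.le
      · rw [← add_div, le_div_iff₀ hpos]
        nlinarith
    · rintro ⟨hth, h1⟩
      have hpos : 0 < h - b := by linarith
      have e : s - (α * (h - t) + β * (t - b)) / (h - b) =
          (s * (h - b) - (α * (h - t) + β * (t - b))) / (h - b) := by
          field_simp
      rw [e, abs_div, abs_of_pos hpos, div_le_div_iff_of_pos_right hpos, abs_le] at h1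
      obtain ⟨h1, h2⟩ := h1
      have n1 : 0 ≤ (h - t) * a := mul_nonneg (by linarith) ha.le
      have n2 : 0 ≤ (t - b) * a := mul_nonneg (by linarith) ha.le
      have n3 : 0 ≤ (t - b) * (a * b + (α * h - b * β)) :=
        mul_nonneg (by linarith) (by linarith)
      have n4 : 0 ≤ (t - b) * (a * b - (α * h - b * β)) :=
        mul_nonneg (by linarith) (by linarith)
      have m1 := mul_le_mul_of_nonneg_left h1 hb.le
      have m2 := mul_le_mul_of_nonneg_left h2 hb.le
      have n5 : 0 ≤ t * (a * b + (α * h - b * β)) := mul_nonneg ht (by linarith)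
      have n6 : 0 ≤ t * (a * b - (α * h - b * β)) := mul_nonneg ht (by linarith)
      simp only [abs_le]
      refine ⟨⟨?_, ?_⟩, ⟨?_, ?_⟩, ?_, ?_⟩
      · linarith
      · refine le_of_mul_le_mul_left ?_ hb
        nlinarith
      · linarith
      · refine le_of_mul_le_mul_left ?_ hb
        nlinarith
      · refine le_of_mul_le_mul_left ?_ hpos
        nlinarith
      · refine le_of_mul_le_mul_left ?_ hpos
        nlinarith

lemma strips_iff {a b h α β s t : ℝ} (ha : 0 < a) (hb : 0 < b) (hbh : b ≤ h)
    (hk : |α * h - b * β| ≤ a * b) :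
    (|(β - α - a) * t - (h - b) * s| ≤ (α + a) * h - b * β ∧
      |(α - a - β) * t + (h - b) * s| ≤ β * b - h * (α - a) ∧
      |2 * α * t - 2 * b * s| ≤ 2 * a * b) ↔
    |t| ≤ h ∧ |s - chordMid b h α β t| ≤ halfWidth a b h t := by
  rcases le_total 0 t with ht | ht
  · exact strips_iff_of_nonneg ha hb hbh hk ht
  · have key := strips_iff_of_nonneg (s := -s) ha hb hbh hk (neg_nonneg.2 ht)
    have e4 : halfWidth a b h (-t) = halfWidth a b h t := by simp [halfWidth]
    rw [chordMid_neg hb.le, e4, abs_neg, ← abs_neg ((β - α - a) * -t - _),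
      ← abs_neg ((α - a - β) * -t + _), ← abs_neg (2 * α * -t - _), ← abs_neg (-s - _)] at key
    convert key using 4 <;> ring_nf

lemma inner_eq_coord (x y : E2) : ⟪x, y⟫ = x 0 * y 0 + x 1 * y 1 := by
  simp [PiLp.inner_apply, Fin.sum_univ_two, mul_comm]

lemma coord_sq_of_norm_eq_one {v : E2} (hv : ‖v‖ = 1) : v 0 ^ 2 + v 1 ^ 2 = 1 := by
  have := EuclideanSpace.real_norm_sq_eq v
  rw [hv, Fin.sum_univ_two] at this
  linarith

lemma det2_eq_frame {v : E2} (hv : ‖v‖ = 1) (u x : E2) :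
    det2 u x = ⟪u, v⟫ * det2 v x - det2 v u * ⟪x, v⟫ := by
  have h := coord_sq_of_norm_eq_one hv
  simp only [inner_eq_coord, det2]
  linear_combination (-(u 0 * x 1 - u 1 * x 0)) * h

/-- Description of a hexagon by its chords parallel to the diagonal `p - r`. -/
lemma mem_hexHull_iff_chord {p q r v : E2} (h : ConvexTriple p q r) (hv : ‖v‖ = 1) {l : ℝ}
    (hl : 0 < l) (hd : p - r = l • v) (x : E2) :
    x ∈ hexHull p q r ↔ |det2 v x| ≤ det2 v q ∧
      |⟪x, v⟫ - chordMid (det2 v p) (det2 v q) (⟪p + r, v⟫ / 2) ⟪q, v⟫ (det2 v x)| ≤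
        halfWidth (l / 2) (det2 v p) (det2 v q) (det2 v x) := by
  have hr : r = p - l • v := by rw [← hd]; abel
  have hvv : ⟪v, v⟫ = 1 := by rw [real_inner_self_eq_norm_sq, hv]; norm_num
  have hdr : det2 v r = det2 v p := by rw [hr]; simp [det2]; ring
  have hir : ⟪r, v⟫ = ⟪p, v⟫ - l := by
    rw [hr, inner_sub_left, real_inner_smul_left, hvv, mul_one]
  rw [mem_hexHull_iff h]
  obtain ⟨hA, hB, hC, h1, h2, h3⟩ := h
  have hsub : ∀ a b : E2, det2 v (a - b) = det2 v a - det2 v b := fun a b => by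
    simp [det2]; ring
  have hadd : ∀ a b : E2, det2 v (a + b) = det2 v a + det2 v b := fun a b => by
    simp [det2]; ring
  rw [det2_eq_frame hv p q] at *
  rw [det2_eq_frame hv q r] at *
  rw [det2_eq_frame hv p r] at *
  rw [det2_eq_frame hv (q - p) x, det2_eq_frame hv (r - q) x, det2_eq_frame hv (p + r) x]
  simp only [hsub, hadd, inner_sub_left, inner_add_left, hir, hdr] at *
  have hb : 0 < det2 v p := by
    refine pos_of_mul_pos_right (a := l) ?_ hl.le
    linarith
  have hbh : det2 v p ≤ det2 v q := by
    refine le_of_mul_le_mul_left ?_ hl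
    linarith
  rw [← strips_iff (half_pos hl) hb hbh]
  · congr! 3
    all_goals ring_nf
  · rw [abs_le]
    constructor <;> linarith

lemma steiner_eq_of_chord {v x₀ : E2} (hv : ‖v‖ = 1) {h : ℝ} {m L : ℝ → ℝ} {A : Set E2}
    (hA : ∀ x, x ∈ A ↔ |det2 v (x - x₀)| ≤ h ∧
      |⟪x - x₀, v⟫ - m (det2 v (x - x₀))| ≤ L (det2 v (x - x₀)))
    (hL : ∀ t, |t| ≤ h → 0 ≤ L t) :
    steiner v ⟪x₀, v⟫ A = {y | |det2 v (y - x₀)| ≤ h ∧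
      |⟪y - x₀, v⟫| ≤ L (det2 v (y - x₀))} := by
  have hvv : ⟪v, v⟫ = 1 := by rw [real_inner_self_eq_norm_sq, hv]; norm_num
  have hline : ∀ (x : E2) (t : ℝ), det2 v (x + t • v - x₀) = det2 v (x - x₀) := fun x t => by
    simp [det2]; ring
  have hin : ∀ (x : E2) (t : ℝ), ⟪x, v⟫ = ⟪x₀, v⟫ → ⟪x + t • v - x₀, v⟫ = t := fun x t hx => by
    rw [inner_sub_left, inner_add_left, real_inner_smul_left, hvv, hx]; ring
  have hne : ∀ x : E2, (A ∩ lineThrough x v).Nonempty → |det2 v (x - x₀)| ≤ h := by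
    rintro x ⟨_, hyA, t, rfl⟩
    have := ((hA _).1 hyA).1
    rwa [hline] at this
  have hμ : ∀ x : E2, ⟪x, v⟫ = ⟪x₀, v⟫ → |det2 v (x - x₀)| ≤ h →
      (A ∩ lineThrough x v).Nonempty ∧
      μH[1] (A ∩ lineThrough x v) = ENNReal.ofReal (2 * L (det2 v (x - x₀))) := by
    intro x hx hxh
    set t := det2 v (x - x₀) with ht
    have h0 := hL t hxh
    have hseg : A ∩ lineThrough x v =
        segment ℝ (x + (m t - L t) • v) (x + (m t + L t) • v) := by
      ext y
      rw [segment_eq_image_lineMap]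
      constructor
      · rintro ⟨hyA, s, rfl⟩
        have := ((hA _).1 hyA).2
        rw [hline, hin x s hx, ← ht, abs_le] at this
        rcases h0.eq_or_lt with h0 | h0
        · refine ⟨0, by simp, ?_⟩
          have : s = m t := by linarith
          simp [← h0, this]
        · refine ⟨(s - (m t - L t)) / (2 * L t), ⟨?_, ?_⟩, ?_⟩
          · exact div_nonneg (by linarith) (by linarith)
          · rw [div_le_one (by linarith)]; linarith
          · rw [AffineMap.lineMap_apply]
            ext i
            simp
            field_simp
            ring
      · rintro ⟨s, ⟨hs0, hs1⟩, rfl⟩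
        have e : AffineMap.lineMap (x + (m t - L t) • v) (x + (m t + L t) • v) s =
            x + (m t - L t + s * (2 * L t)) • v := by
          rw [AffineMap.lineMap_apply]
          ext i
          simp
          ring
        rw [e]
        refine ⟨(hA _).2 ?_, _, rfl⟩
        rw [hline, hin x _ hx, ← ht]
        exact ⟨hxh, abs_le.2 ⟨by nlinarith, by nlinarith⟩⟩
    rw [hseg]
    refine ⟨⟨_, left_mem_segment ℝ _ _⟩, ?_⟩
    rw [hausdorffMeasure_segment, edist_dist, dist_eq_norm]
    congr 1
    have e : x + (m t - L t) • v - (x + (m t + L t) • v) = (-(2 * L t)) • v := by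
      ext i
      simp
      ring
    rw [e, norm_smul, hv, mul_one, norm_neg, Real.norm_of_nonneg (by linarith)]
  ext y
  constructor
  · rintro ⟨x, hx, hn, r, rfl, hr⟩
    have hxh := hne x hn
    rw [(hμ x hx hxh).2, ENNReal.ofReal_le_ofReal_iff (by linarith [hL _ hxh])] at hr
    simp only [Set.mem_ofPred_eq]
    rw [hline, hin x r hx]
    exact ⟨hxh, by linarith⟩
  · rintro ⟨hy1, hy2⟩
    have hx : ⟪y - ⟪y - x₀, v⟫ • v, v⟫ = ⟪x₀, v⟫ := by
      rw [inner_sub_left, real_inner_smul_left, hvv, inner_sub_left]; ring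
    have e : det2 v (y - ⟪y - x₀, v⟫ • v - x₀) = det2 v (y - x₀) := by
      have := hline y (-⟪y - x₀, v⟫)
      rwa [neg_smul, ← sub_eq_add_neg] at this
    obtain ⟨h1, h2⟩ := hμ _ hx (by rwa [e])
    refine ⟨_, hx, h1, ⟪y - x₀, v⟫, by simp, ?_⟩
    rw [h2, e]
    exact ENNReal.ofReal_le_ofReal (by linarith)

/-- Coordinates with respect to the orthonormal frame given by `v` and its normal vector. -/
def frameIsometry (v : E2) (hv : ‖v‖ = 1) : E2 →ₗᵢ[ℝ] E2 where
  toFun x := !₂[det2 v x, ⟪x, v⟫]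
  map_add' x y := by
    ext i
    fin_cases i <;> simp [det2, inner_add_left]
    ring
  map_smul' c x := by
    ext i
    fin_cases i <;> simp [det2, real_inner_smul_left]
    ring
  norm_map' x := by
    have h := coord_sq_of_norm_eq_one hv
    rw [← sq_eq_sq₀ (norm_nonneg _) (norm_nonneg _), EuclideanSpace.real_norm_sq_eq,
      EuclideanSpace.real_norm_sq_eq]
    simp only [LinearMap.coe_mk, AddHom.coe_mk, Fin.sum_univ_two, inner_eq_coord, det2]
    simp
    linear_combination (x 0 ^ 2 + x 1 ^ 2) * h

lemma volume_eq_of_chord {v : E2} (hv : ‖v‖ = 1) {h : ℝ} {m L : ℝ → ℝ} {A : Set E2}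
    (hA : ∀ x, x ∈ A ↔ |det2 v x| ≤ h ∧ |⟪x, v⟫ - m (det2 v x)| ≤ L (det2 v x))
    (hmeas : MeasurableSet A) :
    volume A = ∫⁻ t in Icc (-h) h, ENNReal.ofReal (2 * L t) := by
  let e : E2 ≃ₗᵢ[ℝ] E2 := (frameIsometry v hv).toLinearIsometryEquiv rfl
  let M : E2 ≃ᵐ ℝ × ℝ := e.toHomeomorph.toMeasurableEquiv.trans
    ((MeasurableEquiv.toLp 2 (Fin 2 → ℝ)).symm.trans MeasurableEquiv.finTwoArrow)
  have hM : MeasurePreserving M volume volume :=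
    (volume_preserving_finTwoArrow ℝ).comp
      ((EuclideanSpace.volume_preserving_symm_measurableEquiv_toLp (Fin 2)).comp
        e.measurePreserving)
  have hMx : ∀ x, M x = (det2 v x, ⟪x, v⟫) := fun x => rfl
  have h1 : volume A = volume (M.symm ⁻¹' A) := by
    rw [hM.symm.measure_preimage hmeas.nullMeasurableSet]
  rw [h1, Measure.volume_eq_prod, Measure.prod_apply (M.symm.measurable hmeas),
    ← lintegral_indicator measurableSet_Icc]
  congr 1
  ext t
  have hs : Prod.mk t ⁻¹' (M.symm ⁻¹' A) = {s : ℝ | |t| ≤ h ∧ |s - m t| ≤ L t} := by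
    ext s
    have := hMx (M.symm (t, s))
    rw [MeasurableEquiv.apply_symm_apply, Prod.mk.injEq] at this
    rw [Set.mem_preimage, Set.mem_preimage, hA, ← this.1, ← this.2]
    rfl
  rw [hs, Set.indicator_apply]
  split_ifs with ht
  · have : {s : ℝ | |t| ≤ h ∧ |s - m t| ≤ L t} = Icc (m t - L t) (m t + L t) := by
      ext s
      simp only [Set.mem_ofPred_eq, abs_le, Set.mem_Icc]
      constructor
      · rintro ⟨-, h1, h2⟩
        exact ⟨by linarith, by linarith⟩
      · rintro ⟨h1, h2⟩
        exact ⟨ht, by linarith, by linarith⟩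
    rw [this, Real.volume_Icc]
    congr 1
    ring
  · have : {s : ℝ | |t| ≤ h ∧ |s - m t| ≤ L t} = ∅ := by
      ext s
      simp only [Set.mem_ofPred_eq, abs_le, Set.mem_empty_iff_false, iff_false]
      rintro ⟨h1, -⟩
      exact ht h1
    simp [this]

/-- Rotation of a vector by a quarter turn. -/
def rot (x : E2) : E2 := !₂[-x 1, x 0]

/-- The hexagon which is symmetric with respect to the line spanned by `d` and its normal,
with vertices `±(d / 2 + y • rot d)`, `±(z • rot d)`, `±(-d / 2 + y • rot d)`. -/
def symHex (d : E2) (y z : ℝ) : Set E2 :=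
  hexHull ((1 / 2 : ℝ) • d + y • rot d) (z • rot d) (-((1 / 2 : ℝ) • d) + y • rot d)

lemma norm_sq_eq_coord (d : E2) : ‖d‖ ^ 2 = d 0 ^ 2 + d 1 ^ 2 := by
  rw [EuclideanSpace.real_norm_sq_eq, Fin.sum_univ_two]

lemma norm_rot (x : E2) : ‖rot x‖ = ‖x‖ := by
  rw [← sq_eq_sq₀ (norm_nonneg _) (norm_nonneg _), norm_sq_eq_coord, norm_sq_eq_coord]
  simp [rot]; ring

lemma isCompact_hexHull (p q r : E2) : IsCompact (hexHull p q r) :=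
  (Set.toFinite _).isCompact_convexHull ℝ

lemma convexTriple_sym {d : E2} {y z : ℝ} (hd : d ≠ 0) (hy : 0 < y) (hyz : y ≤ z) :
    ConvexTriple ((1 / 2 : ℝ) • d + y • rot d) (z • rot d)
      (-((1 / 2 : ℝ) • d) + y • rot d) := by
  have hN : 0 < ‖d‖ ^ 2 := by positivity
  have hz : 0 < z := hy.trans_le hyz
  have e1 : det2 ((1 / 2 : ℝ) • d + y • rot d) (z • rot d) = z * ‖d‖ ^ 2 / 2 := by
    rw [norm_sq_eq_coord]; simp [det2, rot]; ring
  have e2 : det2 (z • rot d) (-((1 / 2 : ℝ) • d) + y • rot d) = z * ‖d‖ ^ 2 / 2 := by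
    rw [norm_sq_eq_coord]; simp [det2, rot]; ring
  have e3 : det2 ((1 / 2 : ℝ) • d + y • rot d) (-((1 / 2 : ℝ) • d) + y • rot d) =
      y * ‖d‖ ^ 2 := by
    rw [norm_sq_eq_coord]; simp [det2, rot]; ring
  have h1 : 0 < z * ‖d‖ ^ 2 := by positivity
  have h2 : 0 < y * ‖d‖ ^ 2 := by positivity
  have h3 : y * ‖d‖ ^ 2 ≤ z * ‖d‖ ^ 2 := mul_le_mul_of_nonneg_right hyz hN.le
  constructor <;> simp only [e1, e2, e3] <;> linarith

lemma ConvexTriple.sub_ne_zero {p q r : E2} (h : ConvexTriple p q r) : p - r ≠ 0 := by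
  intro h0
  obtain rfl : p = r := sub_eq_zero.1 h0
  have := h.pr_pos
  simp [det2] at this
  linarith

section chords

variable {p q r v : E2}

lemma mem_symHex_iff_chord {l y z : ℝ} (hv : ‖v‖ = 1) (hl : 0 < l) (hy : 0 < y)
    (hyz : y ≤ z) (x : E2) :
    x ∈ symHex (l • v) y z ↔ |det2 v x| ≤ z * l ∧
      |⟪x, v⟫ - 0| ≤ halfWidth (l / 2) (y * l) (z * l) (det2 v x) := by
  have hd : l • v ≠ 0 := by
    intro h0
    have := congrArg norm h0
    rw [norm_smul, hv, Real.norm_of_nonneg hl.le] at this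
    simp at this
    linarith
  have h := coord_sq_of_norm_eq_one hv
  rw [symHex, mem_hexHull_iff_chord (convexTriple_sym hd hy hyz) hv hl (by module)]
  have e1 : det2 v ((1 / 2 : ℝ) • l • v + y • rot (l • v)) = y * l := by
    simp [det2, rot]; linear_combination (y * l) * h
  have e2 : det2 v (z • rot (l • v)) = z * l := by
    simp [det2, rot]; linear_combination (z * l) * h
  have e3 : ⟪(1 / 2 : ℝ) • l • v + y • rot (l • v) +
      (-((1 / 2 : ℝ) • l • v) + y • rot (l • v)), v⟫ / 2 = 0 := by
    simp [inner_eq_coord, rot]; ring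
  have e4 : ⟪z • rot (l • v), v⟫ = 0 := by
    simp [inner_eq_coord, rot]; ring
  rw [e1, e2, e3, e4, chordMid_zero]

lemma ConvexTriple.height_eq (h : ConvexTriple p q r) {l : ℝ} (hl : 0 < l) (hv : ‖v‖ = 1)
    (hd : p - r = l • v) :
    det2 v p = det2 p r / ‖p - r‖ ^ 2 * l ∧
      det2 v q = (det2 p q + det2 q r) / ‖p - r‖ ^ 2 * l ∧
      0 < det2 p r / ‖p - r‖ ^ 2 ∧
      det2 p r / ‖p - r‖ ^ 2 ≤ (det2 p q + det2 q r) / ‖p - r‖ ^ 2 := by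
  have hn : ‖p - r‖ = l := by rw [hd, norm_smul, hv, mul_one, Real.norm_of_nonneg hl.le]
  have hN : 0 < ‖p - r‖ ^ 2 := by rw [hn]; positivity
  have hr : r = p - l • v := by rw [← hd]; abel
  refine ⟨?_, ?_, div_pos h.pr_pos hN, div_le_div_of_nonneg_right h.pr_le hN.le⟩
  · rw [hn]
    field_simp
    rw [hr]
    simp [det2]
    ring
  · rw [hn]
    field_simp
    rw [hr]
    simp [det2]
    ring

end chords

lemma unit_smul_norm {d : E2} (hd : d ≠ 0) : ‖‖d‖⁻¹ • d‖ = 1 ∧ ‖d‖ • (‖d‖⁻¹ • d) = d := by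
  have : ‖d‖ ≠ 0 := norm_ne_zero_iff.2 hd
  constructor
  · rw [norm_smul, norm_inv, norm_norm, inv_mul_cancel₀ this]
  · rw [smul_smul, mul_inv_cancel₀ this, one_smul]

lemma mem_translate_iff (x₀ x : E2) (A : Set E2) : x ∈ (fun y => x₀ + y) '' A ↔ x - x₀ ∈ A := by
  constructor
  · rintro ⟨y, hy, rfl⟩
    simpa using hy
  · intro h
    exact ⟨_, h, by simp⟩

/-- Steiner symmetrization of a hexagon in the direction of a short diagonal. -/
lemma steiner_hexHull {p q r : E2} (h : ConvexTriple p q r) (x₀ : E2) :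
    steiner (‖p - r‖⁻¹ • (p - r)) ⟪x₀, ‖p - r‖⁻¹ • (p - r)⟫
        ((fun y => x₀ + y) '' hexHull p q r) =
      (fun y => x₀ + y) '' symHex (p - r) (det2 p r / ‖p - r‖ ^ 2)
        ((det2 p q + det2 q r) / ‖p - r‖ ^ 2) := by
  have hd := h.sub_ne_zero
  have hl : 0 < ‖p - r‖ := norm_pos_iff.2 hd
  obtain ⟨hv, hdv⟩ := unit_smul_norm hd
  obtain ⟨e1, e2, hy, hyz⟩ := h.height_eq hl hv hdv.symm
  rw [steiner_eq_of_chord hv (fun x => by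
    rw [mem_translate_iff, mem_hexHull_iff_chord h hv hl hdv.symm])
    (fun t ht => halfWidth_nonneg (by positivity) ht)]
  ext x
  rw [mem_translate_iff, Set.mem_ofPred_eq]
  have := mem_symHex_iff_chord hv hl hy hyz (x - x₀)
  rw [hdv] at this
  rw [this, sub_zero, e1, e2]

lemma mem_symHex_iff {d : E2} {y z : ℝ} (hd : d ≠ 0) (hy : 0 < y) (hyz : y ≤ z) (x : E2) :
    x ∈ symHex d y z ↔ |⟪x, d⟫| ≤ ‖d‖ ^ 2 / 2 ∧
      |det2 d x| ≤ z * ‖d‖ ^ 2 - 2 * (z - y) * |⟪x, d⟫| := by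
  rw [symHex, mem_hexHull_iff (convexTriple_sym hd hy hyz)]
  have e1 : det2 ((1 / 2 : ℝ) • d + y • rot d) (z • rot d) = z * ‖d‖ ^ 2 / 2 := by
    rw [norm_sq_eq_coord]; simp [det2, rot]; ring
  have e2 : det2 (z • rot d) (-((1 / 2 : ℝ) • d) + y • rot d) = z * ‖d‖ ^ 2 / 2 := by
    rw [norm_sq_eq_coord]; simp [det2, rot]; ring
  have e3 : det2 ((1 / 2 : ℝ) • d + y • rot d) (-((1 / 2 : ℝ) • d) + y • rot d) =
      y * ‖d‖ ^ 2 := by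
    rw [norm_sq_eq_coord]; simp [det2, rot]; ring
  have f1 : det2 (z • rot d - ((1 / 2 : ℝ) • d + y • rot d)) x =
      -((z - y) * ⟪x, d⟫ + det2 d x / 2) := by
    simp [det2, rot, inner_eq_coord]; ring
  have f2 : det2 (-((1 / 2 : ℝ) • d) + y • rot d - z • rot d) x =
      (z - y) * ⟪x, d⟫ - det2 d x / 2 := by
    simp [det2, rot, inner_eq_coord]; ring
  have f3 : det2 ((1 / 2 : ℝ) • d + y • rot d + (-((1 / 2 : ℝ) • d) + y • rot d)) x =
      -(2 * (y * ⟪x, d⟫)) := by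
    simp [det2, rot, inner_eq_coord]; ring
  rw [e1, e2, e3, f1, f2, f3, abs_neg, abs_neg, abs_mul, abs_mul, abs_two, abs_of_pos hy]
  have h3 : 2 * (y * |⟪x, d⟫|) ≤ y * ‖d‖ ^ 2 ↔ |⟪x, d⟫| ≤ ‖d‖ ^ 2 / 2 := by
    rw [← mul_le_mul_iff_right₀ hy (b := |⟪x, d⟫|)]
    constructor <;> intro <;> linarith
  rw [h3]
  have hw : (z - y) * |⟪x, d⟫| = |(z - y) * ⟪x, d⟫| := by
    rw [abs_mul, abs_of_nonneg (sub_nonneg.2 hyz)]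
  rw [mul_assoc, hw]
  constructor
  · rintro ⟨h1, h2, h3⟩
    refine ⟨h3, ?_⟩
    rw [abs_le] at h1 h2
    rcases abs_cases ((z - y) * ⟪x, d⟫) with h | h <;> rcases abs_cases (det2 d x) with h' | h' <;>
      linarith
  · rintro ⟨h3, h4⟩
    refine ⟨?_, ?_, h3⟩ <;> rw [abs_le] <;> constructor <;>
    rcases abs_cases ((z - y) * ⟪x, d⟫) with h | h <;> rcases abs_cases (det2 d x) with h' | h' <;>
      linarith

lemma integral_abs_symm {a : ℝ} (ha : 0 ≤ a) : ∫ t in (-a)..a, |t| = a ^ 2 := by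
  rw [← intervalIntegral.integral_add_adjacent_intervals (b := 0)
    (continuous_abs.intervalIntegrable _ _) (continuous_abs.intervalIntegrable _ _)]
  have h1 : ∫ t in (-a)..0, |t| = ∫ t in (-a)..0, -t := by
    refine intervalIntegral.integral_congr fun t ht => ?_
    rw [Set.uIcc_of_le (by linarith)] at ht
    exact abs_of_nonpos ht.2
  have h2 : ∫ t in (0)..a, |t| = ∫ t in (0)..a, t := by
    refine intervalIntegral.integral_congr fun t ht => ?_
    rw [Set.uIcc_of_le ha] at ht
    exact abs_of_nonneg ht.1
  rw [h1, h2, intervalIntegral.integral_neg, integral_id, integral_id]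
  ring

lemma volume_symHex {d : E2} {y z : ℝ} (hd : d ≠ 0) (hy : 0 < y) (hyz : y ≤ z) :
    volume (symHex d y z) = ENNReal.ofReal (‖d‖ ^ 2 * (y + z)) := by
  have hl : 0 < ‖d‖ := norm_pos_iff.2 hd
  have hv : ‖‖d‖⁻¹ • rot d‖ = 1 := by
    rw [norm_smul, norm_rot, norm_inv, norm_norm, inv_mul_cancel₀ hl.ne']
  have key := volume_eq_of_chord (A := symHex d y z) hv (h := ‖d‖ / 2) (m := fun _ => 0)
    (L := fun t => z * ‖d‖ - 2 * (z - y) * |t|) ?_ (isCompact_hexHull _ _ _).measurableSet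
  · rw [key, ← ofReal_integral_eq_lintegral_ofReal]
    · congr 1
      rw [MeasureTheory.integral_Icc_eq_integral_Ioc,
        ← intervalIntegral.integral_of_le (by linarith)]
      have hi : IntervalIntegrable (fun t : ℝ => |t|) volume (-(‖d‖ / 2)) (‖d‖ / 2) :=
        continuous_abs.intervalIntegrable _ _
      rw [intervalIntegral.integral_const_mul, intervalIntegral.integral_sub
        intervalIntegrable_const (hi.const_mul _), intervalIntegral.integral_const,
        intervalIntegral.integral_const_mul, integral_abs_symm (by positivity), smul_eq_mul]
      ring
    · exact Continuous.integrableOn_Icc (by fun_prop)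
    · refine (ae_restrict_iff' measurableSet_Icc).2 (Filter.Eventually.of_forall fun t ht => ?_)
      have : |t| ≤ ‖d‖ / 2 := abs_le.2 ht
      have h1 : (z - y) * |t| ≤ (z - y) * (‖d‖ / 2) :=
        mul_le_mul_of_nonneg_left this (by linarith)
      have h2 : 0 < y * ‖d‖ := by positivity
      simp only [Pi.zero_apply]
      linarith
  · intro x
    have e1 : det2 (‖d‖⁻¹ • rot d) x = -(‖d‖⁻¹ * ⟪x, d⟫) := by
      simp [det2, rot, inner_eq_coord]; ring
    have e2 : ⟪x, ‖d‖⁻¹ • rot d⟫ = ‖d‖⁻¹ * det2 d x := by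
      simp [det2, rot, inner_eq_coord]; ring
    rw [mem_symHex_iff hd hy hyz, e1, e2, sub_zero, abs_neg, abs_mul, abs_mul,
      abs_of_pos (inv_pos.2 hl), inv_mul_le_iff₀ hl, inv_mul_le_iff₀ hl]
    congr! 2
    · ring
    · field_simp

lemma volume_hexHull {p q r : E2} (h : ConvexTriple p q r) :
    volume (hexHull p q r) = ENNReal.ofReal (det2 p q + det2 q r + det2 p r) := by
  have hd := h.sub_ne_zero
  have hl : 0 < ‖p - r‖ := norm_pos_iff.2 hd
  obtain ⟨hv, hdv⟩ := unit_smul_norm hd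
  obtain ⟨e1, e2, hy, hyz⟩ := h.height_eq hl hv hdv.symm
  have k1 := volume_eq_of_chord hv (mem_hexHull_iff_chord h hv hl hdv.symm)
    (isCompact_hexHull _ _ _).measurableSet
  have k2 := volume_eq_of_chord hv (m := fun _ => 0) (mem_symHex_iff_chord hv hl hy hyz)
    (isCompact_hexHull _ _ _).measurableSet
  rw [e1, e2] at k1
  rw [k1, ← k2, hdv, volume_symHex hd hy hyz]
  congr 1
  field_simp
  ring

lemma hexHull_perm {p q r p' q' r' : E2}
    (h : ({p, q, r, -p, -q, -r} : Set E2) = {p', q', r', -p', -q', -r'}) :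
    hexHull p q r = hexHull p' q' r' := by rw [hexHull, hexHull, h]

lemma hexHull_rotate (p q r : E2) : hexHull q r (-p) = hexHull p q r :=
  hexHull_perm (by ext y; simp; tauto)

lemma ConvexTriple.rotate {p q r : E2} (h : ConvexTriple p q r) : ConvexTriple q r (-p) := by
  obtain ⟨hA, hB, hC, h1, h2, h3⟩ := h
  have e1 : det2 r (-p) = det2 p r := by simp [det2]; ring
  have e2 : det2 q (-p) = det2 p q := by simp [det2]; ring
  constructor <;> linarith

lemma exists_convexTriple_of_parallelogram {p q r : E2} (hpq : det2 p q ≠ 0)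
    (h : |det2 q r| + |det2 p r| ≤ |det2 p q|) :
    ∃ p' q' r', ConvexTriple p' q' r' ∧ hexHull p' q' r' = hexHull p q r := by
  wlog hpos : 0 < det2 p q generalizing q
  · have hneg : 0 < det2 p (-q) := by
      have e : det2 p (-q) = -det2 p q := by simp [det2]; ring
      rw [e]
      exact neg_pos.2 (lt_of_le_of_ne (not_lt.1 hpos) hpq)
    have e1 : det2 (-q) r = -det2 q r := by simp [det2]; ring
    have e2 : det2 p (-q) = -det2 p q := by simp [det2]; ring
    obtain ⟨p', q', r', h1, h2⟩ := this hneg.ne' (by rwa [e1, e2, abs_neg, abs_neg]) hneg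
    exact ⟨p', q', r', h1, h2.trans (hexHull_perm (by ext y; simp; tauto))⟩
  have e1 : det2 p ((1 / 2 : ℝ) • (p + q)) = det2 p q / 2 := by simp [det2]; ring
  have e2 : det2 ((1 / 2 : ℝ) • (p + q)) q = det2 p q / 2 := by simp [det2]; ring
  have hT : ConvexTriple p ((1 / 2 : ℝ) • (p + q)) q := by
    constructor <;> linarith
  refine ⟨_, _, _, hT, Set.Subset.antisymm ?_ ?_⟩
  · have hp : p ∈ hexHull p q r := subset_convexHull ℝ _ (by simp)
    have hq : q ∈ hexHull p q r := subset_convexHull ℝ _ (by simp)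
    have hm : (1 / 2 : ℝ) • (p + q) ∈ hexHull p q r := by
      rw [smul_add]
      exact convex_convexHull ℝ _ hp hq (by norm_num) (by norm_num) (by norm_num)
    refine convexHull_min ?_ (convex_convexHull ℝ _)
    rintro y (rfl | rfl | rfl | rfl | rfl | rfl)
    exacts [hp, hm, hq, hexHull_neg_mem hp, hexHull_neg_mem hm, hexHull_neg_mem hq]
  · have hp : p ∈ hexHull p ((1 / 2 : ℝ) • (p + q)) q := subset_convexHull ℝ _ (by simp)
    have hq : q ∈ hexHull p ((1 / 2 : ℝ) • (p + q)) q := subset_convexHull ℝ _ (by simp)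
    have hr : r ∈ hexHull p ((1 / 2 : ℝ) • (p + q)) q := by
      rw [mem_hexHull_iff hT, e1, e2]
      have f1 : det2 ((1 / 2 : ℝ) • (p + q) - p) r = (det2 q r - det2 p r) / 2 := by
        simp [det2]; ring
      have f2 : det2 (q - (1 / 2 : ℝ) • (p + q)) r = (det2 q r - det2 p r) / 2 := by
        simp [det2]; ring
      have f3 : det2 (p + q) r = det2 q r + det2 p r := by
        simp [det2]; ring
      rw [f1, f2, f3]
      rw [abs_of_pos hpos] at h
      have g1 := le_abs_self (det2 q r)
      have g2 := le_abs_self (det2 p r)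
      have g3 := neg_abs_le (det2 q r)
      have g4 := neg_abs_le (det2 p r)
      simp only [abs_le]
      refine ⟨⟨?_, ?_⟩, ⟨?_, ?_⟩, ?_, ?_⟩ <;> linarith
    refine convexHull_min ?_ (convex_convexHull ℝ _)
    rintro y (rfl | rfl | rfl | rfl | rfl | rfl)
    exacts [hp, hq, hr, hexHull_neg_mem hp, hexHull_neg_mem hq, hexHull_neg_mem hr]

lemma eq_zero_of_det2_eq_zero {p q r u : E2} (h : (interior (hexHull p q r)).Nonempty)
    (hp : det2 u p = 0) (hq : det2 u q = 0) (hr : det2 u r = 0) : u = 0 := by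
  let f : E2 →ₗ[ℝ] ℝ :=
    { toFun := det2 u
      map_add' := fun x y => by simp [det2]; ring
      map_smul' := fun c x => by simp [det2]; ring }
  have hsub : hexHull p q r ⊆ (LinearMap.ker f : Set E2) := by
    refine convexHull_min ?_ (LinearMap.ker f).convex
    have hp' : p ∈ LinearMap.ker f := hp
    have hq' : q ∈ LinearMap.ker f := hq
    have hr' : r ∈ LinearMap.ker f := hr
    rintro y (rfl | rfl | rfl | rfl | rfl | rfl) <;> simpa using ‹_›
  have htop := Submodule.eq_top_of_nonempty_interior' (LinearMap.ker f)
    (h.mono (interior_mono hsub))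
  have hz : ∀ x, det2 u x = 0 := fun x => by
    have : x ∈ LinearMap.ker f := htop ▸ Submodule.mem_top
    exact this
  have h1 := hz !₂[0, 1]
  have h2 := hz !₂[1, 0]
  simp [det2] at h1 h2
  ext i
  fin_cases i <;> simp [h1, h2]

lemma exists_convexTriple {p q r : E2} (h : (interior (hexHull p q r)).Nonempty) :
    ∃ p' q' r', ConvexTriple p' q' r' ∧ hexHull p' q' r' = hexHull p q r := by
  have hsymm : ∀ x y : E2, |det2 x y| = |det2 y x| := fun x y => by
    rw [← abs_neg]
    congr 1
    simp [det2]; ring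
  have hne : det2 p q ≠ 0 ∨ det2 q r ≠ 0 ∨ det2 p r ≠ 0 := by
    by_contra! hcon
    obtain ⟨h1, h2, h3⟩ := hcon
    have hswap : ∀ x y : E2, det2 x y = 0 → det2 y x = 0 := fun x y hxy => by
      simp [det2] at *; linarith
    have hself : ∀ x : E2, det2 x x = 0 := fun x => by simp [det2]; ring
    have p0 := eq_zero_of_det2_eq_zero h (hself p) h1 h3
    have q0 := eq_zero_of_det2_eq_zero h (hswap _ _ h1) (hself q) h2
    have r0 := eq_zero_of_det2_eq_zero h (hswap _ _ h3) (hswap _ _ h2) (hself r)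
    have := eq_zero_of_det2_eq_zero (u := !₂[1, 0]) h (by simp [det2, p0]) (by simp [det2, q0])
      (by simp [det2, r0])
    simpa using congrArg (fun x : E2 => x 0) this
  by_cases c1 : |det2 q r| + |det2 p r| ≤ |det2 p q|
  · refine exists_convexTriple_of_parallelogram (fun h0 => ?_) c1
    rw [h0, abs_zero] at c1
    have a1 := abs_nonneg (det2 q r)
    have a2 := abs_nonneg (det2 p r)
    have b1 : det2 q r = 0 := abs_eq_zero.1 (by linarith)
    have b2 : det2 p r = 0 := abs_eq_zero.1 (by linarith)
    simp_all
  by_cases c2 : |det2 p q| + |det2 p r| ≤ |det2 q r|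
  · have e : hexHull q r p = hexHull p q r := hexHull_perm (by ext y; simp; tauto)
    rw [← e]
    refine exists_convexTriple_of_parallelogram (fun h0 => ?_)
      (by rw [hsymm r p, hsymm q p]; linarith)
    rw [h0, abs_zero] at c2
    have a1 := abs_nonneg (det2 p q)
    have a2 := abs_nonneg (det2 p r)
    have b1 : det2 p q = 0 := abs_eq_zero.1 (by linarith)
    have b2 : det2 p r = 0 := abs_eq_zero.1 (by linarith)
    simp_all
  by_cases c3 : |det2 p q| + |det2 q r| ≤ |det2 p r|
  · have e : hexHull p r q = hexHull p q r := hexHull_perm (by ext y; simp; tauto)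
    rw [← e]
    refine exists_convexTriple_of_parallelogram (fun h0 => ?_) (by rw [hsymm r q]; linarith)
    rw [h0, abs_zero] at c3
    have a1 := abs_nonneg (det2 p q)
    have a2 := abs_nonneg (det2 q r)
    have b1 : det2 p q = 0 := abs_eq_zero.1 (by linarith)
    have b2 : det2 q r = 0 := abs_eq_zero.1 (by linarith)
    simp_all
  have hnr : ∀ x y : E2, det2 x (-y) = -det2 x y := fun x y => by simp [det2]; ring
  have hnl : ∀ x y : E2, det2 (-x) y = -det2 x y := fun x y => by simp [det2]; ring
  push Not at c1 c2 c3
  clear h hne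
  wlog hq : 0 ≤ det2 p q generalizing q
  · obtain ⟨p', q', r', h1, h2⟩ := this (q := -q)
      (by simpa only [hnl, hnr, abs_neg] using c1)
      (by simpa only [hnl, hnr, abs_neg] using c2)
      (by simpa only [hnl, hnr, abs_neg] using c3) (by rw [hnr]; linarith)
    exact ⟨p', q', r', h1, h2.trans (hexHull_perm (by ext y; simp; tauto))⟩
  wlog hr : 0 ≤ det2 q r generalizing r
  · obtain ⟨p', q', r', h1, h2⟩ := this (r := -r)
      (by simpa only [hnl, hnr, abs_neg] using c1)
      (by simpa only [hnl, hnr, abs_neg] using c2)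
      (by simpa only [hnl, hnr, abs_neg] using c3) (by rw [hnr]; linarith)
    exact ⟨p', q', r', h1, h2.trans (hexHull_perm (by ext y; simp; tauto))⟩
  rw [abs_of_nonneg hq, abs_of_nonneg hr] at c1 c2 c3
  rcases le_total 0 (det2 p r) with hs | hs
  · rw [abs_of_nonneg hs] at c1 c2 c3
    exact ⟨p, q, r, ⟨by linarith, by linarith, by linarith, by linarith, by linarith,
      by linarith⟩, rfl⟩
  · rw [abs_of_nonpos hs] at c1 c2 c3
    have e : det2 r q = -det2 q r := by simp [det2]; ring
    refine ⟨p, -r, q, ?_, hexHull_perm (by ext y; simp; tauto)⟩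
    constructor <;> linarith [hnr p r, hnl r q]

lemma infEDist_hexHull_le {p q r p' q' r' : E2} {ε : ℝ} (hp : dist p p' ≤ ε)
    (hq : dist q q' ≤ ε) (hr : dist r r' ≤ ε) {x : E2} (hx : x ∈ hexHull p q r) :
    infEDist x (hexHull p' q' r') ≤ ENNReal.ofReal ε := by
  have hsub : hexHull p q r ⊆ cthickening ε (hexHull p' q' r') := by
    refine convexHull_min ?_ ((convex_convexHull ℝ _).cthickening ε)
    have hmem : ∀ y z : E2, z ∈ ({p', q', r', -p', -q', -r'} : Set E2) → dist y z ≤ ε →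
        y ∈ cthickening ε (hexHull p' q' r') := fun y z hz hd =>
      mem_cthickening_of_dist_le y z ε _ (subset_convexHull ℝ _ hz) hd
    rintro y (rfl | rfl | rfl | rfl | rfl | rfl)
    exacts [hmem _ p' (by simp) hp, hmem _ q' (by simp) hq, hmem _ r' (by simp) hr,
      hmem _ (-p') (by simp) (by rwa [dist_neg_neg]),
      hmem _ (-q') (by simp) (by rwa [dist_neg_neg]),
      hmem _ (-r') (by simp) (by rwa [dist_neg_neg])]
  exact mem_cthickening_iff.1 (hsub hx)

lemma hausdorffEDist_hexHull_le {p q r p' q' r' : E2} {ε : ℝ} (hp : dist p p' ≤ ε)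
    (hq : dist q q' ≤ ε) (hr : dist r r' ≤ ε) :
    hausdorffEDist (hexHull p q r) (hexHull p' q' r') ≤ ENNReal.ofReal ε :=
  hausdorffEDist_le_of_infEDist (fun _ hx => infEDist_hexHull_le hp hq hr hx)
    (fun _ hx => infEDist_hexHull_le (dist_comm p p' ▸ hp) (dist_comm q q' ▸ hq)
      (dist_comm r r' ▸ hr) hx)

lemma rot_sub (x y : E2) : rot (x - y) = rot x - rot y := by
  ext i
  fin_cases i <;> simp [rot]; ring

lemma norm_sq_smul_add_smul_rot (a b : ℝ) (x : E2) :
    ‖a • x + b • rot x‖ ^ 2 = (a ^ 2 + b ^ 2) * ‖x‖ ^ 2 := by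
  rw [norm_sq_eq_coord, norm_sq_eq_coord]
  simp [rot]; ring

lemma hausdorffEDist_symHex_le (d d' : E2) {y z y' z' : ℝ} {ε : ℝ}
    (h1 : ‖d - d'‖ / 2 + ‖y • rot d - y' • rot d'‖ ≤ ε) (h2 : ‖z • rot d - z' • rot d'‖ ≤ ε) :
    hausdorffEDist (symHex d y z) (symHex d' y' z') ≤ ENNReal.ofReal ε := by
  have hh : ‖(1 / 2 : ℝ) • (d - d')‖ = ‖d - d'‖ / 2 := by
    rw [norm_smul]; norm_num; ring
  refine hausdorffEDist_hexHull_le ?_ (by rwa [dist_eq_norm]) ?_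
  · have e : (1 / 2 : ℝ) • d + y • rot d - ((1 / 2 : ℝ) • d' + y' • rot d') =
        (1 / 2 : ℝ) • (d - d') + (y • rot d - y' • rot d') := by module
    rw [dist_eq_norm, e]
    exact (norm_add_le _ _).trans (by rwa [hh])
  · have e : -((1 / 2 : ℝ) • d) + y • rot d - (-((1 / 2 : ℝ) • d') + y' • rot d') =
        -((1 / 2 : ℝ) • (d - d')) + (y • rot d - y' • rot d') := by module
    rw [dist_eq_norm, e]
    exact (norm_add_le _ _).trans (by rwa [norm_neg, hh])

/-- Symmetrizing a doubly symmetric hexagon in the direction of one of its other short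
diagonals yields a doubly symmetric hexagon again. -/
lemma steiner_symHex {d : E2} {y z : ℝ} (hd : d ≠ 0) (hy : 0 < y) (hyz : y ≤ z) (x₀ : E2)
    {d' : E2} (hd' : d' = (1 / 2 : ℝ) • d + (y + z) • rot d) :
    steiner (‖d'‖⁻¹ • d') ⟪x₀, ‖d'‖⁻¹ • d'⟫ ((fun y => x₀ + y) '' symHex d y z) =
      (fun y => x₀ + y) '' symHex d' (z * ‖d‖ ^ 2 / 2 / ‖d'‖ ^ 2)
        ((z / 2 + y) * ‖d‖ ^ 2 / ‖d'‖ ^ 2) := by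
  have hT := (convexTriple_sym hd hy hyz).rotate
  have key := steiner_hexHull hT x₀
  have e : z • rot d - -((1 / 2 : ℝ) • d + y • rot d) = d' := by rw [hd']; module
  have e1 : det2 (z • rot d) (-((1 / 2 : ℝ) • d + y • rot d)) = z * ‖d‖ ^ 2 / 2 := by
    rw [norm_sq_eq_coord]; simp [det2, rot]; ring
  have e2 : det2 (z • rot d) (-((1 / 2 : ℝ) • d) + y • rot d) +
      det2 (-((1 / 2 : ℝ) • d) + y • rot d) (-((1 / 2 : ℝ) • d + y • rot d)) =
      (z / 2 + y) * ‖d‖ ^ 2 := by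
    rw [norm_sq_eq_coord]; simp [det2, rot]; ring
  rwa [hexHull_rotate, e, e1, e2] at key

/-- The regular hexagon with short diagonal `d`. -/
def regHex (d : E2) : Set E2 := symHex d (√3 / 6) (√3 / 3)

/-- Rotation of the plane by `-π / 3`. -/
def rotSixth (x : E2) : E2 := (1 / 2 : ℝ) • x - (√3 / 2) • rot x

lemma sqrt_three_sq : √3 ^ 2 = (3 : ℝ) := Real.sq_sqrt (by norm_num)

lemma isometry_rotSixth : Isometry rotSixth := by
  refine Isometry.of_dist_eq fun x y => ?_
  have e : rotSixth x - rotSixth y = (1 / 2 : ℝ) • (x - y) + (-(√3 / 2)) • rot (x - y) := by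
    rw [rotSixth, rotSixth, rot_sub]; module
  rw [dist_eq_norm, dist_eq_norm, ← sq_eq_sq₀ (norm_nonneg _) (norm_nonneg _), e,
    norm_sq_smul_add_smul_rot]
  linear_combination (‖x - y‖ ^ 2 / 4) * sqrt_three_sq

lemma regHex_rotSixth (d : E2) : regHex (rotSixth d) = regHex d := by
  have h3 := sqrt_three_sq
  have e1 : (1 / 2 : ℝ) • rotSixth d + (√3 / 6) • rot (rotSixth d) =
      -(-((1 / 2 : ℝ) • d) + (√3 / 6) • rot d) := by
    ext i
    fin_cases i <;> simp [rot, rotSixth]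
    · linear_combination (d 0 / 12) * h3
    · linear_combination (d 1 / 12) * h3
  have e2 : (√3 / 3) • rot (rotSixth d) = (1 / 2 : ℝ) • d + (√3 / 6) • rot d := by
    ext i
    fin_cases i <;> simp [rot, rotSixth]
    · linear_combination (d 0 / 6) * h3
    · linear_combination (d 1 / 6) * h3
  have e3 : -((1 / 2 : ℝ) • rotSixth d) + (√3 / 6) • rot (rotSixth d) = (√3 / 3) • rot d := by
    ext i
    fin_cases i <;> simp [rot, rotSixth]
    · linear_combination (d 0 / 12) * h3
    · linear_combination (d 1 / 12) * h3
  rw [regHex, regHex, symHex, symHex, e1, e2, e3]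
  exact hexHull_perm (by
    ext y; simp only [Set.mem_insert_iff, Set.mem_singleton_iff, neg_neg]; tauto)

lemma regHex_iterate (d : E2) (n : ℕ) : regHex (rotSixth^[n] d) = regHex d := by
  induction n with
  | zero => rfl
  | succ n ih => rw [Function.iterate_succ_apply', regHex_rotSixth, ih]

lemma range_hexVertex : Set.range (fun k : Fin 6 => hexVertex k) =
    {!₂[1, 0], !₂[1 / 2, √3 / 2], !₂[-(1 / 2), √3 / 2], !₂[-1, 0], !₂[-(1 / 2), -(√3 / 2)],
      !₂[1 / 2, -(√3 / 2)]} := by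
  have v0 : hexVertex 0 = !₂[1, 0] := by
    ext i; fin_cases i <;> simp [hexVertex]
  have v1 : hexVertex 1 = !₂[1 / 2, √3 / 2] := by
    ext i; fin_cases i <;> simp [hexVertex]
  have a2 : ((2 : ℕ) : ℝ) * π / 3 = π - π / 3 := by push_cast; ring
  have a3 : ((3 : ℕ) : ℝ) * π / 3 = π := by push_cast; ring
  have a4 : ((4 : ℕ) : ℝ) * π / 3 = π / 3 + π := by push_cast; ring
  have a5 : ((5 : ℕ) : ℝ) * π / 3 = 2 * π - π / 3 := by push_cast; ring
  have v2 : hexVertex 2 = !₂[-(1 / 2), √3 / 2] := by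
    rw [hexVertex, a2, Real.cos_pi_sub, Real.sin_pi_sub]
    ext i; fin_cases i <;> simp
  have v3 : hexVertex 3 = !₂[-1, 0] := by
    rw [hexVertex, a3]
    ext i; fin_cases i <;> simp
  have v4 : hexVertex 4 = !₂[-(1 / 2), -(√3 / 2)] := by
    rw [hexVertex, a4, Real.cos_add_pi, Real.sin_add_pi]
    ext i; fin_cases i <;> simp
  have v5 : hexVertex 5 = !₂[1 / 2, -(√3 / 2)] := by
    rw [hexVertex, a5, Real.cos_two_pi_sub, Real.sin_two_pi_sub]
    ext i; fin_cases i <;> simp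
  rw [← v0, ← v1, ← v2, ← v3, ← v4, ← v5]
  ext x
  simp only [Set.mem_range, Set.mem_insert_iff, Set.mem_singleton_iff]
  constructor
  · rintro ⟨k, rfl⟩
    fin_cases k <;> simp
  · rintro (rfl | rfl | rfl | rfl | rfl | rfl)
    exacts [⟨0, rfl⟩, ⟨1, rfl⟩, ⟨2, rfl⟩, ⟨3, rfl⟩, ⟨4, rfl⟩, ⟨5, rfl⟩]

lemma isRegularHexagon_regHex {d : E2} (hd : d ≠ 0) (x₀ : E2) :
    IsRegularHexagon ((fun y => x₀ + y) '' regHex d) := by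
  have h3 := sqrt_three_sq
  set w : E2 := (1 / 2 : ℝ) • d + (√3 / 6) • rot d with hw
  let f : E2 →ₗ[ℝ] E2 :=
    { toFun := fun x => x 0 • w + x 1 • rot w
      map_add' := fun x y => by simp only [PiLp.add_apply]; module
      map_smul' := fun c x => by
        simp only [PiLp.smul_apply, smul_eq_mul, RingHom.id_apply]; module }
  have hf : ∀ x, f x = x 0 • w + x 1 • rot w := fun _ => rfl
  have hnorm : ∀ x, ‖f x‖ = ‖w‖ * ‖x‖ := fun x => by
    rw [← sq_eq_sq₀ (norm_nonneg _) (by positivity), hf, norm_sq_smul_add_smul_rot, mul_pow,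
      norm_sq_eq_coord x]
    ring
  have hwn : ‖w‖ ^ 2 = ‖d‖ ^ 2 / 3 := by
    rw [hw, norm_sq_smul_add_smul_rot]
    linear_combination (‖d‖ ^ 2 / 36) * h3
  have hwpos : 0 < ‖w‖ := by
    have : 0 < ‖w‖ ^ 2 := by rw [hwn]; positivity
    exact lt_of_pow_lt_pow_left₀ 2 (norm_nonneg _) (by simpa using this)
  have f1 : f !₂[1, 0] = w := by simp [hf]
  have f2 : f !₂[1 / 2, √3 / 2] = (√3 / 3) • rot d := by
    rw [hf, hw]
    ext i
    fin_cases i <;> simp [rot]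
    · linear_combination (-(d 0 / 12)) * h3
    · linear_combination (-(d 1 / 12)) * h3
  have f3 : f !₂[-(1 / 2), √3 / 2] = -((1 / 2 : ℝ) • d) + (√3 / 6) • rot d := by
    rw [hf, hw]
    ext i
    fin_cases i <;> simp [rot]
    · linear_combination (-(d 0 / 12)) * h3
    · linear_combination (-(d 1 / 12)) * h3
  have n1 : (!₂[-1, 0] : E2) = -!₂[1, 0] := by ext i; fin_cases i <;> simp
  have n2 : (!₂[-(1 / 2), -(√3 / 2)] : E2) = -!₂[1 / 2, √3 / 2] := by
    ext i; fin_cases i <;> simp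
  have n3 : (!₂[1 / 2, -(√3 / 2)] : E2) = -!₂[-(1 / 2), √3 / 2] := by
    ext i; fin_cases i <;> simp
  refine ⟨fun x => x₀ + f x, ⟨‖w‖, hwpos, fun x y => ?_⟩, ?_⟩
  · rw [dist_add_left, dist_eq_norm, dist_eq_norm, ← map_sub, hnorm]
  · rw [← Set.image_image (fun y => x₀ + y) f, stdHexagon, LinearMap.image_convexHull,
      range_hexVertex, regHex, symHex, hexHull, n1, n2, n3]
    simp only [Set.image_insert_eq, Set.image_singleton, map_neg, f1, f2, f3, hw]

lemma volume_regHex {d : E2} (hd : d ≠ 0) :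
    volume (regHex d) = ENNReal.ofReal (‖d‖ ^ 2 * (√3 / 2)) := by
  have h : 0 < √3 := by positivity
  rw [regHex, volume_symHex hd (by positivity) (by linarith)]
  congr 1
  ring

/-- The short diagonals of the iterated symmetrizations of a hexagon of area `S`. -/
def diagSeq (S : ℝ) (d₀ : E2) : ℕ → E2
  | 0 => d₀
  | n + 1 => (1 / 2 : ℝ) • diagSeq S d₀ n + (S / ‖diagSeq S d₀ n‖ ^ 2) • rot (diagSeq S d₀ n)

/-- The areas of the parallelograms spanned by the edges next to the symmetrized diagonal, along
the iterated symmetrizations of a hexagon of area `S`. -/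
def areaSeq (S c₀ : ℝ) : ℕ → ℝ
  | 0 => c₀
  | n + 1 => (S - areaSeq S c₀ n) / 2

lemma areaSeq_mem {S c₀ : ℝ} (h0 : 0 < c₀) (h1 : c₀ ≤ S / 2) (n : ℕ) :
    0 < areaSeq S c₀ n ∧ areaSeq S c₀ n ≤ S / 2 := by
  induction n with
  | zero => exact ⟨h0, h1⟩
  | succ n ih =>
    simp only [areaSeq]
    constructor <;> linarith [ih.1, ih.2]

lemma tendsto_areaSeq (S c₀ : ℝ) : Tendsto (areaSeq S c₀) atTop (𝓝 (S / 3)) := by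
  have h : ∀ n, areaSeq S c₀ n = S / 3 + (c₀ - S / 3) * (-1 / 2) ^ n := by
    intro n
    induction n with
    | zero => simp [areaSeq]
    | succ n ih => rw [areaSeq, ih, pow_succ]; ring
  have hp : Tendsto (fun n : ℕ => (-1 / 2 : ℝ) ^ n) atTop (𝓝 0) :=
    tendsto_pow_atTop_nhds_zero_of_abs_lt_one (by rw [abs_lt]; constructor <;> norm_num)
  have := (hp.const_mul (c₀ - S / 3)).const_add (S / 3)
  rw [mul_zero, add_zero] at this
  exact this.congr fun n => (h n).symm

section diagSeq

variable {S : ℝ} {d₀ : E2}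

lemma norm_sq_diagSeq_succ (n : ℕ) (hd : diagSeq S d₀ n ≠ 0) :
    ‖diagSeq S d₀ (n + 1)‖ ^ 2 =
      ‖diagSeq S d₀ n‖ ^ 2 / 4 + S ^ 2 / ‖diagSeq S d₀ n‖ ^ 2 := by
  have : ‖diagSeq S d₀ n‖ ≠ 0 := norm_ne_zero_iff.2 hd
  rw [diagSeq, norm_sq_smul_add_smul_rot]
  field_simp
  ring

lemma diagSeq_ne_zero (hd : d₀ ≠ 0) (n : ℕ) : diagSeq S d₀ n ≠ 0 := by
  induction n with
  | zero => exact hd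
  | succ n ih =>
    have h := norm_sq_diagSeq_succ n ih
    have h1 : 0 < ‖diagSeq S d₀ n‖ ^ 2 := by positivity
    have h2 : 0 < ‖diagSeq S d₀ (n + 1)‖ ^ 2 := by rw [h]; positivity
    intro h0
    simp [h0] at h2

lemma le_norm_sq_diagSeq_succ (hd : d₀ ≠ 0) (n : ℕ) :
    S ≤ ‖diagSeq S d₀ (n + 1)‖ ^ 2 := by
  have hn := diagSeq_ne_zero (S := S) hd n
  rw [norm_sq_diagSeq_succ n hn]
  have h1 : 0 < ‖diagSeq S d₀ n‖ ^ 2 := by positivity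
  generalize ‖diagSeq S d₀ n‖ ^ 2 = X at *
  have e : X / 4 + S ^ 2 / X - S = (X / 2 - S) ^ 2 / X := by field_simp; ring
  have : 0 ≤ (X / 2 - S) ^ 2 / X := by positivity
  linarith

lemma abs_norm_sq_diagSeq_sub_le (hS : 0 < S) (hd : d₀ ≠ 0) (n : ℕ) :
    |‖diagSeq S d₀ (n + 1)‖ ^ 2 - 2 * S / √3| ≤
      |‖diagSeq S d₀ 1‖ ^ 2 - 2 * S / √3| * (5 / 8) ^ n := by
  have h3 := sqrt_three_sq
  induction n with
  | zero => simp
  | succ n ih =>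
    have hX := le_norm_sq_diagSeq_succ (S := S) hd n
    rw [norm_sq_diagSeq_succ (n + 1) (diagSeq_ne_zero hd _)]
    generalize ‖diagSeq S d₀ (n + 1)‖ ^ 2 = X at *
    have hXp : 0 < X := hS.trans_le hX
    have e : X / 4 + S ^ 2 / X - 2 * S / √3 = (X - 2 * S / √3) * (1 / 4 - √3 * S / (2 * X)) := by
      field_simp
      linear_combination (4 * X * S) * h3
    have hb : |1 / 4 - √3 * S / (2 * X)| ≤ 5 / 8 := by
      have hle : √3 ≤ 7 / 4 := Real.sqrt_le_iff.2 ⟨by norm_num, by norm_num⟩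
      have h1 : 0 ≤ √3 * S / (2 * X) := by positivity
      have h2 : √3 * S / (2 * X) ≤ 7 / 8 := by
        rw [div_le_iff₀ (by positivity)]
        nlinarith
      rw [abs_le]
      constructor <;> linarith
    rw [e, abs_mul, pow_succ (5 / 8 : ℝ) n, ← mul_assoc]
    exact mul_le_mul ih hb (abs_nonneg _) (by positivity)

lemma tendsto_norm_sq_diagSeq (hS : 0 < S) (hd : d₀ ≠ 0) :
    Tendsto (fun n => ‖diagSeq S d₀ n‖ ^ 2) atTop (𝓝 (2 * S / √3)) := by
  rw [← tendsto_add_atTop_iff_nat 1, tendsto_iff_dist_tendsto_zero]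
  have hp : Tendsto (fun n : ℕ => |‖diagSeq S d₀ 1‖ ^ 2 - 2 * S / √3| * (5 / 8 : ℝ) ^ n) atTop
      (𝓝 0) := by
    simpa using (tendsto_pow_atTop_nhds_zero_of_lt_one (by norm_num : (0 : ℝ) ≤ 5 / 8)
      (by norm_num)).const_mul |‖diagSeq S d₀ 1‖ ^ 2 - 2 * S / √3|
  exact squeeze_zero (fun _ => dist_nonneg) (fun n => abs_norm_sq_diagSeq_sub_le hS hd n) hp

lemma rotSixth_sub (x : E2) (σ : ℝ) :
    ‖x - rotSixth ((1 / 2 : ℝ) • x + σ • rot x)‖ = |σ - √3 / 2| * ‖x‖ := by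
  have h3 := sqrt_three_sq
  have e : x - rotSixth ((1 / 2 : ℝ) • x + σ • rot x) =
      (-(σ - √3 / 2)) • ((√3 / 2) • x + (1 / 2 : ℝ) • rot x) := by
    ext i
    fin_cases i <;> simp [rot, rotSixth]
    · linear_combination (-(x 0 / 4)) * h3
    · linear_combination (-(x 1 / 4)) * h3
  have hn : ‖(√3 / 2) • x + (1 / 2 : ℝ) • rot x‖ = ‖x‖ := by
    rw [← sq_eq_sq₀ (norm_nonneg _) (norm_nonneg _), norm_sq_smul_add_smul_rot]
    linear_combination (‖x‖ ^ 2 / 4) * h3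
  rw [e, norm_smul, hn, Real.norm_eq_abs, abs_neg]

lemma isometry_rotSixth_iterate (n : ℕ) : Isometry rotSixth^[n] := by
  induction n with
  | zero => exact isometry_id
  | succ n ih => rw [Function.iterate_succ']; exact isometry_rotSixth.comp ih

lemma norm_rotSixth_iterate (x : E2) (n : ℕ) : ‖rotSixth^[n] x‖ = ‖x‖ := by
  have h0 : rotSixth 0 = 0 := by ext i; fin_cases i <;> simp [rotSixth, rot]
  have := (isometry_rotSixth_iterate n).dist_eq x 0
  rwa [Function.iterate_fixed h0, dist_zero_right, dist_zero_right] at this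

/-- After undoing rotations by multiples of `π / 3`, the short diagonals converge. -/
lemma exists_tendsto_rotSixth_diagSeq (hS : 0 < S) (hd : d₀ ≠ 0) :
    ∃ D : E2, ‖D‖ ^ 2 = 2 * S / √3 ∧
      Tendsto (fun n => rotSixth^[n] (diagSeq S d₀ n)) atTop (𝓝 D) := by
  set K := |‖diagSeq S d₀ 1‖ ^ 2 - 2 * S / √3| with hK
  have hKn : 0 ≤ K := abs_nonneg _
  set M := √3 / (2 * S) * √(2 * S / √3 + K) * K with hM
  have hc : CauchySeq fun n => rotSixth^[n + 1] (diagSeq S d₀ (n + 1)) := by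
    refine cauchySeq_of_le_geometric (5 / 8) M (by norm_num) fun n => ?_
    rw [Function.iterate_succ_apply rotSixth (n + 1), (isometry_rotSixth_iterate (n + 1)).dist_eq,
      dist_eq_norm, diagSeq.eq_def S d₀ (n + 1 + 1), rotSixth_sub]
    have hX := le_norm_sq_diagSeq_succ (S := S) hd n
    have hb := abs_norm_sq_diagSeq_sub_le hS hd n
    rw [← hK] at hb
    have hnX : ‖diagSeq S d₀ (n + 1)‖ ≤ √(2 * S / √3 + K) := by
      refine Real.le_sqrt_of_sq_le ?_
      have h1 : K * (5 / 8) ^ n ≤ K := mul_le_of_le_one_right hKn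
        (pow_le_one₀ (by norm_num) (by norm_num))
      linarith [(abs_le.1 hb).2]
    generalize ‖diagSeq S d₀ (n + 1)‖ = ν at *
    have hXp : 0 < ν ^ 2 := hS.trans_le hX
    have hν : ν ≠ 0 := fun h => by simp [h] at hXp
    have e : S / ν ^ 2 - √3 / 2 = -(√3 / (2 * S) * (S / ν ^ 2)) * (ν ^ 2 - 2 * S / √3) := by
      field_simp
      ring
    have hq : S / ν ^ 2 ≤ 1 := (div_le_one hXp).2 hX
    have h1 : |S / ν ^ 2 - √3 / 2| ≤ √3 / (2 * S) * (K * (5 / 8) ^ n) := by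
      rw [e, abs_mul, abs_neg, abs_of_nonneg (by positivity)]
      refine mul_le_mul ?_ hb (abs_nonneg _) (by positivity)
      exact mul_le_of_le_one_right (by positivity) hq
    calc |S / ν ^ 2 - √3 / 2| * ν
        ≤ √3 / (2 * S) * (K * (5 / 8) ^ n) * √(2 * S / √3 + K) :=
          mul_le_mul_of_nonneg h1 hnX (abs_nonneg _) (Real.sqrt_nonneg _)
      _ = M * (5 / 8) ^ n := by rw [hM]; ring
  obtain ⟨D, hD⟩ := cauchySeq_tendsto_of_complete hc
  have hD' : Tendsto (fun n => rotSixth^[n] (diagSeq S d₀ n)) atTop (𝓝 D) :=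
    (tendsto_add_atTop_iff_nat 1).1 hD
  refine ⟨D, ?_, hD'⟩
  refine tendsto_nhds_unique (hD'.norm.pow 2) ?_
  simpa only [norm_rotSixth_iterate] using tendsto_norm_sq_diagSeq hS hd

end diagSeq

/-- The hexagons obtained by iterated symmetrization. -/
def hexSeq (S c₀ : ℝ) (d₀ : E2) (n : ℕ) : Set E2 :=
  symHex (diagSeq S d₀ n) (areaSeq S c₀ n / ‖diagSeq S d₀ n‖ ^ 2)
    ((S - areaSeq S c₀ n) / ‖diagSeq S d₀ n‖ ^ 2)

section hexSeq

variable {S c₀ : ℝ} {d₀ : E2}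

lemma steiner_hexSeq (h0 : 0 < c₀) (h1 : c₀ ≤ S / 2) (hd : d₀ ≠ 0) (x₀ : E2)
    (n : ℕ) :
    steiner (‖diagSeq S d₀ (n + 1)‖⁻¹ • diagSeq S d₀ (n + 1))
        ⟪x₀, ‖diagSeq S d₀ (n + 1)‖⁻¹ • diagSeq S d₀ (n + 1)⟫
        ((fun y => x₀ + y) '' hexSeq S c₀ d₀ n) =
      (fun y => x₀ + y) '' hexSeq S c₀ d₀ (n + 1) := by
  have hn := diagSeq_ne_zero (S := S) hd n
  have hN : 0 < ‖diagSeq S d₀ n‖ ^ 2 := by positivity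
  obtain ⟨ha, hb⟩ := areaSeq_mem h0 h1 n
  rw [hexSeq, hexSeq, steiner_symHex hn (div_pos ha hN)
    (div_le_div_of_nonneg_right (by linarith) hN.le) x₀
    (by rw [diagSeq, ← add_div, add_sub_cancel])]
  congr 2
  · rw [areaSeq]
    field_simp
  · rw [areaSeq]
    field_simp
    ring

lemma tendsto_hausdorffEDist_hexSeq (hS : 0 < S) (hd : d₀ ≠ 0) {D : E2}
    (hD : Tendsto (fun n => rotSixth^[n] (diagSeq S d₀ n)) atTop (𝓝 D)) :
    Tendsto (fun n => hausdorffEDist (hexSeq S c₀ d₀ n) (regHex D)) atTop (𝓝 0) := by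
  have hle : √3 ≤ 7 / 4 := Real.sqrt_le_iff.2 ⟨by norm_num, by norm_num⟩
  have hX := tendsto_norm_sq_diagSeq hS hd
  have hC := tendsto_areaSeq S c₀
  have hX0 : 2 * S / √3 ≠ 0 := by positivity
  set y : ℕ → ℝ := fun n => areaSeq S c₀ n / ‖diagSeq S d₀ n‖ ^ 2 with hy
  set z : ℕ → ℝ := fun n => (S - areaSeq S c₀ n) / ‖diagSeq S d₀ n‖ ^ 2 with hz
  have hyt : Tendsto y atTop (𝓝 (√3 / 6)) := by
    have h : Tendsto y atTop (𝓝 (S / 3 / (2 * S / √3))) := hC.div hX hX0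
    have e : S / 3 / (2 * S / √3) = √3 / 6 := by field_simp; norm_num
    rwa [e] at h
  have hzt : Tendsto z atTop (𝓝 (√3 / 3)) := by
    have h : Tendsto z atTop (𝓝 ((S - S / 3) / (2 * S / √3))) := (hC.const_sub S).div hX hX0
    have e : (S - S / 3) / (2 * S / √3) = √3 / 3 := by field_simp; norm_num
    rwa [e] at h
  set ν : ℕ → ℝ := fun n => ‖rotSixth^[n] (diagSeq S d₀ n)‖ with hν
  set ε : ℕ → ℝ := fun n => (|y n - √3 / 6| + |z n - √3 / 3|) * ν n with hε
  set δ : ℕ → ℝ := fun n => 2 * ‖rotSixth^[n] (diagSeq S d₀ n) - D‖ with hδ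
  have hεt : Tendsto ε atTop (𝓝 0) := by
    have h1 := ((hyt.sub_const (√3 / 6)).abs.add (hzt.sub_const (√3 / 3)).abs).mul hD.norm
    simpa using h1
  have hδt : Tendsto δ atTop (𝓝 0) := by
    have h1 := (hD.sub_const D).norm.const_mul 2
    simpa using h1
  have hlim : Tendsto (fun n => ENNReal.ofReal (ε n) + ENNReal.ofReal (δ n)) atTop (𝓝 0) := by
    have := (ENNReal.tendsto_ofReal hεt).add (ENNReal.tendsto_ofReal hδt)
    simpa using this
  refine tendsto_of_tendsto_of_tendsto_of_le_of_le tendsto_const_nhds hlim (fun _ => zero_le)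
    fun n => ?_
  refine (hausdorffEDist_triangle (t := regHex (diagSeq S d₀ n))).trans (add_le_add ?_ ?_)
  · have hdiff : ∀ a b : ℝ, ‖a • rot (diagSeq S d₀ n) - b • rot (diagSeq S d₀ n)‖ =
        |a - b| * ν n := fun a b => by
      rw [← sub_smul, norm_smul, norm_rot]
      simp only [hν, norm_rotSixth_iterate, Real.norm_eq_abs]
    have hνn : 0 ≤ ν n := norm_nonneg _
    have a1 := mul_nonneg (abs_nonneg (y n - √3 / 6)) hνn
    have a2 := mul_nonneg (abs_nonneg (z n - √3 / 3)) hνn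
    refine hausdorffEDist_symHex_le _ _ ?_ ?_
    · rw [hdiff, sub_self, norm_zero, hε]
      linarith
    · rw [hdiff, hε]
      linarith
  · rw [← regHex_iterate (diagSeq S d₀ n) n]
    have hdiff : ∀ a : ℝ, 0 ≤ a → ‖a • rot (rotSixth^[n] (diagSeq S d₀ n)) - a • rot D‖ =
        a * ‖rotSixth^[n] (diagSeq S d₀ n) - D‖ := fun a ha => by
      rw [← smul_sub, ← rot_sub, norm_smul, norm_rot, Real.norm_of_nonneg ha]
    have hn := norm_nonneg (rotSixth^[n] (diagSeq S d₀ n) - D)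
    refine hausdorffEDist_symHex_le _ _ ?_ ?_
    · rw [hdiff _ (by positivity), hδ]
      nlinarith
    · rw [hdiff _ (by positivity), hδ]
      nlinarith

end hexSeq

lemma volume_translate (x₀ : E2) (A : Set E2) :
    volume ((fun y => x₀ + y) '' A) = volume A := by
  rw [Set.image_add_left, measure_preimage_add]

/-- Every centrally symmetric convex hexagon or parallelogram can be
transformed into a regular hexagon of the same area by (at most countably many) iterated
Steiner symmetrizations. -/
theorem statement0 (H₀ : Set E2) (hH₀ : Hex H₀) :
    ∃ (v : ℕ → E2) (c : ℕ → ℝ) (H : ℕ → Set E2) (Hstar : Set E2),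
      (∀ n, ‖v n‖ = 1) ∧
      H 0 = H₀ ∧
      (∀ n, IsCompact (H n) ∧ Convex ℝ (H n)) ∧
      (∀ n, H (n + 1) = steiner (v n) (c n) (H n)) ∧
      IsRegularHexagon Hstar ∧
      volume Hstar = volume H₀ ∧
      HausdorffTendsto H Hstar := by
  obtain ⟨⟨x₀, p₀, q₀, r₀, hH⟩, hne⟩ := hH₀
  have hne' : (interior (hexHull p₀ q₀ r₀)).Nonempty := by
    rw [hH] at hne
    have := (Homeomorph.addLeft x₀).image_interior (hexHull p₀ q₀ r₀)
    change (interior ((Homeomorph.addLeft x₀) '' hexHull p₀ q₀ r₀)).Nonempty at hne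
    rw [← this] at hne
    exact Set.image_nonempty.1 hne
  obtain ⟨p, q, r, hT, hpqr⟩ := exists_convexTriple hne'
  have hH' : H₀ = (fun y => x₀ + y) '' hexHull p q r := by rw [hpqr]; exact hH
  have hd := hT.sub_ne_zero
  set S := det2 p q + det2 q r + det2 p r with hSdef
  have hS : 0 < S := by linarith [hT.pq_pos, hT.qr_pos, hT.pr_pos]
  have hc : det2 p r ≤ S / 2 := by linarith [hT.pr_le]
  obtain ⟨D, hDn, hD⟩ := exists_tendsto_rotSixth_diagSeq hS hd
  have hD0 : D ≠ 0 := by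
    rintro rfl
    have : 0 < 2 * S / √3 := by positivity
    simp [← hDn] at this
  let v : ℕ → E2 := fun n => ‖diagSeq S (p - r) n‖⁻¹ • diagSeq S (p - r) n
  let H : ℕ → Set E2 := fun n => Nat.casesOn n H₀ fun n =>
    (fun y => x₀ + y) '' hexSeq S (det2 p r) (p - r) n
  have hcc : ∀ a b c : E2, IsCompact ((fun y => x₀ + y) '' hexHull a b c) ∧
      Convex ℝ ((fun y => x₀ + y) '' hexHull a b c) := fun a b c =>
    ⟨(isCompact_hexHull a b c).image (by fun_prop), (convex_convexHull ℝ _).translate x₀⟩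
  refine ⟨v, fun n => ⟪x₀, v n⟫, H, (fun y => x₀ + y) '' regHex D,
    fun n => (unit_smul_norm (diagSeq_ne_zero hd n)).1, rfl, ?_, ?_,
    isRegularHexagon_regHex hD0 x₀, ?_, ?_⟩
  · rintro (_ | n)
    · change IsCompact H₀ ∧ Convex ℝ H₀
      rw [hH']
      exact hcc p q r
    · exact hcc _ _ _
  · rintro (_ | n)
    · change (fun y => x₀ + y) '' hexSeq S (det2 p r) (p - r) 0 =
        steiner (‖p - r‖⁻¹ • (p - r)) ⟪x₀, ‖p - r‖⁻¹ • (p - r)⟫ H₀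
      rw [hH', steiner_hexHull hT x₀, hexSeq, diagSeq, areaSeq, hSdef, add_sub_cancel_right]
    · exact (steiner_hexSeq hT.pr_pos hc hd x₀ n).symm
  · rw [hH', volume_translate, volume_translate, volume_regHex hD0, volume_hexHull hT, hDn]
    congr 1
    field_simp
    linarith
  · refine (tendsto_add_atTop_iff_nat 1).1 ?_
    have hiso : Isometry fun y : E2 => x₀ + y := isometry_add_left x₀
    refine (tendsto_hausdorffEDist_hexSeq (c₀ := det2 p r) hS hd hD).congr fun n => ?_
    exact (hausdorffEDist_image hiso).symm
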